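/- Let N, s, M be natural numbers with N = s·M and s, M > 0, let π : ZMod N → ZMod M be the reduction homomorphism, let B ⊆ ZMod N be a transversal for π with section β : ZMod M → ZMod N, and let σ : ZMod N → ℂ satisfy 𝓕_N σ = s·1_B. Then Shannon subsampling is diagonal in frequency: for every X : ZMod N → ℂ and every k : ZMod M, 𝓕_M(↓_s(σ ⋆ X))(k) = 𝓕_N X (β k). -/

import Mathlib

open ZMod Finset

noncomputable section

/-- Circular convolution on `ZMod N`: `(f ⋆ g)(n) = ∑ m, f m * g (n - m)`. -/
def cconv {N : ℕ} [NeZero N] (f g : ZMod N → ℂ) : ZMod N → ℂ :=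
  fun n => ∑ m : ZMod N, f m * g (n - m)

/-- Decimation operator `↓_s : (ZMod N → ℂ) → (ZMod M → ℂ)`, `(↓_s f)(k) = f (s * k.val)`. -/
def decim (N M s : ℕ) (f : ZMod N → ℂ) : ZMod M → ℂ :=
  fun k => f ((s * k.val : ℕ) : ZMod N)

/-- `B` is a transversal for `π`: each fiber of `π` contains exactly one element of `B`. -/
def IsTransversal {N M : ℕ} (π : ZMod N → ZMod M) (B : Set (ZMod N)) : Prop :=
  ∀ k : ZMod M, ∃! x : ZMod N, x ∈ B ∧ π x = k

/-!
Fourier inversion on `ZMod N` and `ZMod M`, together with `e(s x / N) = e(x / M)`, shows that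
decimation folds the spectrum: `s * 𝓕_M (↓_s f) k` is the sum of `𝓕_N f` over the fiber of `π`
above `k`. For `f = σ ⋆ X` the folded spectrum is `s * 1_B * 𝓕_N X`, of which a transversal keeps
exactly one term per fiber.
-/

theorem dft_cconv {N : ℕ} [NeZero N] (f g : ZMod N → ℂ) : 𝓕 (cconv f g) = 𝓕 f * 𝓕 g := by
  ext k
  have translate (m : ZMod N) :
      ∑ n, stdAddChar (-(n * k)) * g (n - m) = stdAddChar (-(m * k)) * 𝓕 g k := by
    rw [dft_apply, mul_sum, ← Equiv.sum_comp (Equiv.addRight m)]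
    refine sum_congr rfl fun n _ => ?_
    rw [Equiv.coe_addRight, add_sub_cancel_right, smul_eq_mul, ← mul_assoc,
      ← AddChar.map_add_eq_mul]
    ring_nf
  calc 𝓕 (cconv f g) k
      = ∑ m, f m * ∑ n, stdAddChar (-(n * k)) * g (n - m) := by
        simp only [dft_apply, cconv, smul_eq_mul, mul_sum, mul_left_comm]
        exact sum_comm
    _ = ∑ m, stdAddChar (-(m * k)) * f m * 𝓕 g k := by
        simp only [translate, mul_left_comm, mul_assoc]
    _ = 𝓕 f k * 𝓕 g k := by
        simp only [dft_apply f, smul_eq_mul, sum_mul]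

section Decimation

variable {N s M : ℕ} [NeZero N] [NeZero M]

theorem stdAddChar_natCast_mul (hN : N = s * M) (x : ZMod N) :
    stdAddChar ((s : ZMod N) * x) =
      stdAddChar (castHom (Dvd.intro_left s hN.symm) (ZMod M) x) := by
  obtain ⟨n, rfl⟩ := intCast_surjective x
  have hs : (s : ℂ) ≠ 0 := by
    intro h
    exact NeZero.ne N (by simp [hN, Nat.cast_eq_zero.mp h])
  have hM : (M : ℂ) ≠ 0 := NeZero.ne _
  rw [map_intCast, ← Int.cast_natCast s, ← Int.cast_mul, stdAddChar_coe, stdAddChar_coe]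
  congr 1
  rw [hN]
  push_cast
  field_simp

theorem smul_decim_invDFT (hN : N = s * M) (Ψ : ZMod N → ℂ) :
    (s : ℂ) • decim N M s (𝓕⁻ Ψ) =
      𝓕⁻ fun k => ∑ j with castHom (Dvd.intro_left s hN.symm) (ZMod M) j = k, Ψ j := by
  ext m
  set π := castHom (Dvd.intro_left s hN.symm) (ZMod M)
  have character (j : ZMod N) :
      stdAddChar (j * ((s * m.val : ℕ) : ZMod N)) = stdAddChar (π j * m) := by
    have h : j * ((s * m.val : ℕ) : ZMod N) = s * (j * (m.val : ZMod N)) := by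
      push_cast
      ring
    rw [h, stdAddChar_natCast_mul hN, map_mul, map_natCast, natCast_zmod_val]
  have normalization : (s : ℂ) * (N : ℂ)⁻¹ = (M : ℂ)⁻¹ := by
    have hNM : (N : ℂ) = s * M := by exact_mod_cast hN
    have hN0 : (s : ℂ) * M ≠ 0 := hNM ▸ NeZero.ne (N : ℂ)
    rw [hNM, mul_inv, mul_inv_cancel_left₀ (left_ne_zero_of_mul hN0)]
  calc (s : ℂ) * 𝓕⁻ Ψ ((s * m.val : ℕ) : ZMod N)
      = (M : ℂ)⁻¹ * ∑ j, stdAddChar (π j * m) * Ψ j := by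
        simp only [invDFT_apply, smul_eq_mul, character, ← mul_assoc, normalization]
    _ = (M : ℂ)⁻¹ * ∑ k, ∑ j with π j = k, stdAddChar (π j * m) * Ψ j := by
        rw [sum_fiberwise]
    _ = (M : ℂ)⁻¹ * ∑ k, stdAddChar (k * m) * ∑ j with π j = k, Ψ j := by
        simp only [mul_sum]
        congr! 3 with k _ j hj
        rw [(mem_filter.mp hj).2]
    _ = _ := by simp only [invDFT_apply, smul_eq_mul]

theorem natCast_mul_dft_decim (hN : N = s * M) (f : ZMod N → ℂ) (k : ZMod M) :
    s * 𝓕 (decim N M s f) k =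
      ∑ j with castHom (Dvd.intro_left s hN.symm) (ZMod M) j = k, 𝓕 f j := by
  have h := smul_decim_invDFT hN (𝓕 f)
  rw [LinearEquiv.symm_apply_apply, LinearEquiv.eq_symm_apply, _root_.map_smul] at h
  exact congrFun h k

end Decimation

theorem IsTransversal.sum_fiber_indicator {N M : ℕ} [NeZero N] {E : Type*} [AddCommMonoid E]
    {π : ZMod N → ZMod M} {B : Set (ZMod N)} (hB : IsTransversal π B) {b : ZMod N} (hb : b ∈ B)
    (F : ZMod N → E) : ∑ j with π j = π b, B.indicator F j = F b := by
  rw [sum_eq_single_of_mem b (by simp), Set.indicator_of_mem hb]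
  intro j hj hjb
  exact Set.indicator_of_notMem
    (fun hjB => hjb ((hB (π b)).unique ⟨hjB, (mem_filter.mp hj).2⟩ ⟨hb, rfl⟩)) F

/-- Shannon subsampling is diagonal in frequency:
`𝓕_M (↓_s (σ ⋆ X)) k = 𝓕_N X (β k)`. -/
theorem dft_shannon_subsample (N s M : ℕ) [NeZero N] [NeZero M]
    (hs : 0 < s) (hM : 0 < M) (hN : N = s * M)
    (B : Set (ZMod N))
    (hB : IsTransversal (ZMod.castHom (show M ∣ N from ⟨s, by rw [hN]; ring⟩) (ZMod M)) B)
    (β : ZMod M → ZMod N)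
    (hβ : ∀ k : ZMod M, β k ∈ B ∧
      ZMod.castHom (show M ∣ N from ⟨s, by rw [hN]; ring⟩) (ZMod M) (β k) = k)
    (σ : ZMod N → ℂ)
    (hσ : ∀ m : ZMod N, 𝓕 σ m = (s : ℂ) * Set.indicator B (1 : ZMod N → ℂ) m) :
    ∀ (X : ZMod N → ℂ) (k : ZMod M),
      𝓕 (decim N M s (cconv σ X)) k = 𝓕 X (β k) := by
  intro X k
  obtain ⟨hβB, hβk⟩ := hβ k
  have spectrum : 𝓕 (cconv σ X) = B.indicator fun j => s * 𝓕 X j := by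
    ext j
    by_cases hj : j ∈ B <;> simp [dft_cconv, hσ, hj]
  have folded : s * 𝓕 (decim N M s (cconv σ X)) k = s * 𝓕 X (β k) := by
    simpa only [natCast_mul_dft_decim hN, spectrum, hβk] using
      hB.sum_fiber_indicator hβB fun j => s * 𝓕 X j
  exact mul_left_cancel₀ (Nat.cast_ne_zero.mpr hs.ne') folded

end
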